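/- arXiv:math/9901156 — 5 statements merged into one kernel-verified Lean document; each statement's English description precedes it below -/
import Mathlib

section
/- Let K be a field, A a valuation subring of K with maximal ideal m, I the Iwahori subgroup of SL₂, B(K) the upper-triangular subgroup of SL₂(K), s = (0,1;−1,0), and for a ∈ K let u₋(a) = (1,0;a,1) be the lower unipotent matrix. Then for every a ∈ K and every w ∈ {1, s}, the matrix w·s·u₋(a) lies in I·w·B(K) ∪ I·w·s·B(K) (set products inside SL₂(K)). -/
open scoped Pointwise

/-- `SL₂(K)`. -/
abbrev SL2 (K : Type*) [Field K] := Matrix.SpecialLinearGroup (Fin 2) K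

/-- The Iwahori subgroup of `SL₂(K)` relative to a valuation subring `A` of `K`:
matrices with entries in `A` whose lower-left entry is a nonunit of `A`
(i.e. lies in the maximal ideal of `A`). -/
def Iwahori {K : Type*} [Field K] (A : ValuationSubring K) : Set (SL2 K) :=
  {g | (∀ i j, g.1 i j ∈ A) ∧ ∃ h : g.1 1 0 ∈ A, (⟨g.1 1 0, h⟩ : A) ∈ nonunits A}

/-- The upper triangular (BorelSL2) subgroup `B(K)` of `SL₂(K)`. -/
def BorelSL2 (K : Type*) [Field K] : Set (SL2 K) := {g | g.1 1 0 = 0}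

/-- The Weyl element `s = (0,1;−1,0)`. -/
def sMat (K : Type*) [Field K] : SL2 K :=
  ⟨!![0, 1; -1, 0], by simp [Matrix.det_fin_two_of]⟩

/-- The lower unipotent matrix `u₋(a) = (1,0;a,1)`. -/
def uLower {K : Type*} [Field K] (a : K) : SL2 K :=
  ⟨!![1, 0; a, 1], by simp [Matrix.det_fin_two_of]⟩

theorem nonunit_aux {K : Type*} [Field K] (A : ValuationSubring K) (x : K) (h : x ∈ A)
    (hx : x = 0 ∨ x⁻¹ ∉ A) : (⟨x, h⟩ : A) ∈ nonunits A := by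
  rw [mem_nonunits_iff]
  intro hu
  obtain ⟨y, hy⟩ := hu.exists_right_inv
  have hxy : x * (y : K) = 1 := congrArg Subtype.val hy
  rcases hx with rfl | hx
  · simp at hxy
  · exact hx (by rw [inv_eq_of_mul_eq_one_right hxy]; exact y.2)

theorem iwahori_lower {K : Type*} [Field K] (A : ValuationSubring K) (x : K) (h : x ∈ A)
    (hx : x = 0 ∨ x⁻¹ ∉ A) : uLower x ∈ Iwahori A := by
  refine ⟨?_, h, nonunit_aux A x h hx⟩
  intro i j
  fin_cases i <;> fin_cases j <;> simp [uLower, h, A.one_mem, A.zero_mem]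

/-- The upper unipotent matrix. -/
def uUpper {K : Type*} [Field K] (c : K) : SL2 K :=
  ⟨!![1, c; 0, 1], by simp [Matrix.det_fin_two_of]⟩

theorem iwahori_upper {K : Type*} [Field K] (A : ValuationSubring K) (c : K) (h : c ∈ A) :
    uUpper c ∈ Iwahori A := by
  refine ⟨?_, A.zero_mem, nonunit_aux A 0 A.zero_mem (Or.inl rfl)⟩
  intro i j
  fin_cases i <;> fin_cases j <;> simp [uUpper, h, A.one_mem, A.zero_mem]

/-- The Borel element `(a,1;0,a⁻¹)`. -/
def bMat {K : Type*} [Field K] (a : K) (ha : a ≠ 0) : SL2 K :=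
  ⟨!![a, 1; 0, a⁻¹], by simp [Matrix.det_fin_two_of, ha]⟩

theorem val_sMat (K : Type*) [Field K] : (sMat K).1 = !![0, 1; -1, 0] := rfl

theorem val_uLower {K : Type*} [Field K] (a : K) : (uLower a).1 = !![1, 0; a, 1] := rfl

theorem val_uUpper {K : Type*} [Field K] (a : K) : (uUpper a).1 = !![1, a; 0, 1] := rfl

theorem val_bMat {K : Type*} [Field K] (a : K) (ha : a ≠ 0) :
    (bMat a ha).1 = !![a, 1; 0, a⁻¹] := rfl

theorem val_mul {K : Type*} [Field K] (g h : SL2 K) : (g * h).1 = g.1 * h.1 := rfl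

/-- Rank-one Bruhat-cell lemma (Lemma 4.1): for any `a ∈ K` and `w ∈ {1, s}`,
`w·s·u₋(a) ∈ I·w·B(K) ∪ I·w·s·B(K)`. -/
theorem stmt_1 {K : Type*} [Field K] (A : ValuationSubring K) (a : K)
    (w : SL2 K) (hw : w = 1 ∨ w = sMat K) :
    w * sMat K * uLower a ∈
      (Iwahori A * ({w} : Set (SL2 K)) * BorelSL2 K) ∪
        (Iwahori A * ({w} : Set (SL2 K)) * ({sMat K} : Set (SL2 K)) * BorelSL2 K) := by
  have h1B : (1 : SL2 K) ∈ BorelSL2 K := by simp [BorelSL2]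
  have hbB : ∀ ha : a ≠ 0, bMat a ha ∈ BorelSL2 K := fun _ => rfl
  rcases hw with rfl | rfl
  · by_cases h : a ∈ A
    · right
      have e : 1 * sMat K * uLower a = uUpper (-a) * 1 * sMat K * 1 := by
        apply Subtype.ext
        simp only [mul_one, one_mul, val_mul, val_sMat, val_uLower, val_uUpper, val_bMat]
        ext i j
        fin_cases i <;> fin_cases j <;> simp [*]
      rw [e]
      exact Set.mul_mem_mul (Set.mul_mem_mul (Set.mul_mem_mul
        (iwahori_upper A _ (A.neg_mem _ h)) rfl) rfl) h1B
    · left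
      have ha : a ≠ 0 := by rintro rfl; exact h A.zero_mem
      have hi : a⁻¹ ∈ A := (A.mem_or_inv_mem a).resolve_left h
      have e : 1 * sMat K * uLower a = uLower (-a⁻¹) * 1 * bMat a ha := by
        apply Subtype.ext
        simp only [mul_one, one_mul, val_mul, val_sMat, val_uLower, val_uUpper, val_bMat]
        ext i j
        fin_cases i <;> fin_cases j <;> simp [*]
      rw [e]
      refine Set.mul_mem_mul (Set.mul_mem_mul
        (iwahori_lower A _ (A.neg_mem _ hi) (Or.inr ?_)) rfl) (hbB ha)
      intro h'
      apply h
      have := A.neg_mem _ h'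
      simpa [inv_neg] using this
  · by_cases h : a = 0 ∨ a⁻¹ ∉ A
    · right
      have hA : a ∈ A := by
        rcases h with rfl | h
        · exact A.zero_mem
        · exact (A.mem_or_inv_mem a).resolve_right h
      have e : sMat K * sMat K * uLower a = uLower a * sMat K * sMat K * 1 := by
        apply Subtype.ext
        simp only [mul_one, one_mul, val_mul, val_sMat, val_uLower, val_uUpper, val_bMat]
        ext i j
        fin_cases i <;> fin_cases j <;> simp [*]
      rw [e]
      exact Set.mul_mem_mul (Set.mul_mem_mul (Set.mul_mem_mul
        (iwahori_lower A _ hA h) rfl) rfl) h1B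
    · left
      push Not at h
      obtain ⟨ha, hi⟩ := h
      have e : sMat K * sMat K * uLower a = uUpper a⁻¹ * sMat K * bMat a ha := by
        apply Subtype.ext
        simp only [mul_one, one_mul, val_mul, val_sMat, val_uLower, val_uUpper, val_bMat]
        ext i j
        fin_cases i <;> fin_cases j <;> simp [*]
      rw [e]
      exact Set.mul_mem_mul (Set.mul_mem_mul (iwahori_upper A _ hi) rfl) (hbB ha)
end

section
/- Let F be a totally real number field with ring of integers 𝓞_F, and for each field embedding σ : F → ℝ let n_σ ∈ ℤ. Then the following are equivalent: (i) there exists a subgroup U of the unit group 𝓞_Fˣ of finite index such that ∏_σ σ(u)^{n_σ} = 1 for every u ∈ U (the product over all embeddings of F into ℝ); (ii) the integers n_σ are all equal to one common value N (so the character u ↦ ∏_σ σ(u)^{n_σ} is the N-th power of the norm). -/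
open scoped NumberField

open NumberField in
/-- real embeddings correspond to infinite places -/
lemma aux_bij (F : Type*) [Field F] [NumberField F]
    (h : ∀ φ : F →+* ℂ, NumberField.ComplexEmbedding.IsReal φ) :
    Function.Bijective (fun σ : F →+* ℝ => InfinitePlace.mk (Complex.ofRealHom.comp σ)) := by
  constructor
  · intro σ τ hst
    have key : Complex.ofRealHom.comp σ = Complex.ofRealHom.comp τ := by
      rcases InfinitePlace.mk_eq_iff.mp hst with h1 | h1
      · exact h1
      · rw [← h1]; exact ((ComplexEmbedding.isReal_iff).mp (h _)).symm
    ext x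
    have := RingHom.congr_fun key x
    simpa using this
  · intro w
    refine ⟨(h w.embedding).embedding, ?_⟩
    have : Complex.ofRealHom.comp (h w.embedding).embedding = w.embedding := by
      ext x
      simp
    simp only [this, InfinitePlace.mk_embedding]

open NumberField in
lemma aux_abs (F : Type*) [Field F] [NumberField F] (σ : F →+* ℝ) (x : F) :
    InfinitePlace.mk (Complex.ofRealHom.comp σ) x = |σ x| := by
  simp [InfinitePlace.apply]

open NumberField in
lemma aux_sum (F : Type*) [Field F] [NumberField F]
    (h : ∀ φ : F →+* ℂ, NumberField.ComplexEmbedding.IsReal φ) (u : (𝓞 F)ˣ) :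
    ∑ σ : F →+* ℝ, Real.log |σ (algebraMap (𝓞 F) F (u : 𝓞 F))| = 0 := by
  rw [← Units.sum_mult_mul_log u]
  refine Fintype.sum_bijective _ (aux_bij F h) _ _ fun σ => ?_
  have hr : (InfinitePlace.mk (Complex.ofRealHom.comp σ)).IsReal := ⟨_, h _, rfl⟩
  rw [aux_abs, InfinitePlace.mult, if_pos hr]
  simp

/-- An algebraic character of the units of a totally real field is trivial on a
finite-index subgroup of the units if and only if it is a power of the norm,
i.e. all the exponents `n_σ` are equal (remark inside Lemma 4.11(ii)). -/
theorem stmt_7 (F : Type*) [Field F] [NumberField F]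
    (htotallyReal : ∀ φ : F →+* ℂ, NumberField.ComplexEmbedding.IsReal φ)
    (n : (F →+* ℝ) → ℤ) :
    (∃ U : Subgroup (𝓞 F)ˣ, U.FiniteIndex ∧
        ∀ u ∈ U, ∏ σ : F →+* ℝ, (σ (algebraMap (𝓞 F) F ((u : (𝓞 F)ˣ) : 𝓞 F))) ^ (n σ) = 1) ↔
      ∃ N : ℤ, ∀ σ : F →+* ℝ, n σ = N := by
  have hne : ∀ (σ : F →+* ℝ) (u : (𝓞 F)ˣ), σ (algebraMap (𝓞 F) F (u : 𝓞 F)) ≠ 0 := by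
    intro σ u
    simp
  constructor
  · rintro ⟨U, hU, hU1⟩
    have hne' : Nonempty (F →+* ℝ) :=
      ⟨(htotallyReal (Classical.arbitrary (F →+* ℂ))).embedding⟩
    obtain ⟨σ₁, hσ₁⟩ := Finite.exists_min n
    refine ⟨n σ₁, fun σ => ?_⟩
    obtain ⟨u, hu⟩ := NumberField.Units.dirichletUnitTheorem.exists_unit F
      (NumberField.InfinitePlace.mk (Complex.ofRealHom.comp σ₁))
    have hlog : ∀ τ : F →+* ℝ, τ ≠ σ₁ →
        Real.log |τ (algebraMap (𝓞 F) F (u : 𝓞 F))| < 0 := by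
      intro τ hτ
      rw [← aux_abs]
      exact hu _ fun hc => hτ ((aux_bij F htotallyReal).1 hc)
    have h0 : ∑ τ : F →+* ℝ,
        (n τ : ℝ) * Real.log |τ (algebraMap (𝓞 F) F (u : 𝓞 F))| = 0 := by
      obtain ⟨k, hk, hmem⟩ : ∃ k : ℕ, 0 < k ∧ u ^ k ∈ U := by
        obtain ⟨k, hk, -, hm⟩ := U.exists_pow_mem_of_index_ne_zero hU.index_ne_zero u
        exact ⟨k, hk, hm⟩
      have h1 := congrArg (fun x => Real.log x) (hU1 _ hmem)
      simp only [Real.log_one] at h1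
      rw [Real.log_prod (fun τ _ => zpow_ne_zero _ (hne τ _))] at h1
      have h2 : (k : ℝ) * ∑ τ : F →+* ℝ,
        (n τ : ℝ) * Real.log |τ (algebraMap (𝓞 F) F (u : 𝓞 F))| = 0 := by
        rw [← h1, Finset.mul_sum]
        refine Finset.sum_congr rfl fun τ _ => ?_
        rw [Real.log_zpow, Units.val_pow_eq_pow_val, map_pow, map_pow, Real.log_pow,
          Real.log_abs]
        ring
      exact (mul_eq_zero.mp h2).resolve_left (by positivity)
    have hs := aux_sum F htotallyReal u
    have h3 : ∑ τ : F →+* ℝ,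
        ((n τ : ℝ) - n σ₁) * -Real.log |τ (algebraMap (𝓞 F) F (u : 𝓞 F))| = 0 := by
      have : ∑ τ : F →+* ℝ,
        ((n τ : ℝ) - n σ₁) * -Real.log |τ (algebraMap (𝓞 F) F (u : 𝓞 F))| =
        n σ₁ * ∑ τ : F →+* ℝ, Real.log |τ (algebraMap (𝓞 F) F (u : 𝓞 F))| -
        ∑ τ : F →+* ℝ, (n τ : ℝ) * Real.log |τ (algebraMap (𝓞 F) F (u : 𝓞 F))| := by
        rw [Finset.mul_sum, ← Finset.sum_sub_distrib]
        exact Finset.sum_congr rfl fun τ _ => by ring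
      rw [this, hs, h0]; simp
    by_cases hσ : σ = σ₁
    · rw [hσ]
    have h4 := (Finset.sum_eq_zero_iff_of_nonneg (fun τ _ => ?_)).mp h3 σ (Finset.mem_univ _)
    · have h5 := (mul_eq_zero.mp h4).resolve_right (by have := hlog σ hσ; linarith)
      have h6 : (n σ : ℝ) = n σ₁ := by linarith
      exact_mod_cast h6
    · by_cases hτ : τ = σ₁
      · simp [hτ]
      · have a1 : (n σ₁ : ℝ) ≤ n τ := by exact_mod_cast hσ₁ τ
        exact mul_nonneg (by linarith) (by have := hlog τ hτ; linarith)
  · rintro ⟨N, hN⟩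
    let f : (𝓞 F)ˣ →* ℝˣ :=
      ∏ σ : F →+* ℝ, Units.map ((σ.comp (algebraMap (𝓞 F) F) : (𝓞 F) →+* ℝ) : (𝓞 F) →* ℝ)
    have hf : ∀ u : (𝓞 F)ˣ, ((f u : ℝˣ) : ℝ) =
        ∏ σ : F →+* ℝ, σ (algebraMap (𝓞 F) F (u : 𝓞 F)) := by
      intro u
      simp [f, MonoidHom.finsetProd_apply, Units.coe_prod]
    have hfin : Finite f.range := by
      refine Set.Finite.subset (s := {1, -1}) (by simp) ?_
      rintro _ ⟨u, rfl⟩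
      have h1 : Real.log |((f u : ℝˣ) : ℝ)| = 0 := by
        rw [hf, Finset.abs_prod, Real.log_prod (fun τ _ => abs_ne_zero.mpr (hne τ _))]
        exact aux_sum F htotallyReal u
      have h2 : |((f u : ℝˣ) : ℝ)| = 1 :=
        Real.eq_one_of_pos_of_log_eq_zero (abs_pos.mpr (f u).ne_zero) h1
      rcases eq_or_eq_neg_of_abs_eq h2 with h | h
      · left; exact Units.ext h
      · right; exact Units.ext (by simpa using h)
    refine ⟨f.ker, Subgroup.finiteIndex_ker f, fun u hu => ?_⟩
    simp only [hN]
    rw [Finset.prod_zpow, ← hf, MonoidHom.mem_ker.mp hu]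
    simp
end

section
/- Let p be a prime and r ≥ 1. Let g ∈ M₄(ℤ_p) satisfy ᵗg·J·g = J, and write g in 2×2 blocks as g = (A, B; C, D). If every entry of C lies in p^r·ℤ_p, then there exist a unique symmetric matrix X ∈ M₂(ℤ_p) with all entries in p^r·ℤ_p and unique A′, B′, D′ ∈ M₂(ℤ_p) such that q = (A′, B′; 0, D′) satisfies ᵗq·J·q = J and g = (1₂, 0; X, 1₂) · q. -/
open Matrix

/-- The standard symplectic matrix `J = (0, 1₂; −1₂, 0)` in `M₄(R)`. -/
def J4 (R : Type*) [CommRing R] : Matrix (Fin 4) (Fin 4) R :=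
  !![0, 0, 1, 0;
     0, 0, 0, 1;
     -1, 0, 0, 0;
     0, -1, 0, 0]

/-- The `4×4` matrix with the `2×2` blocks `A, B, C, D`. -/
def blocks4 {R : Type*} [CommRing R] (A B C D : Matrix (Fin 2) (Fin 2) R) :
    Matrix (Fin 4) (Fin 4) R :=
  !![A 0 0, A 0 1, B 0 0, B 0 1;
     A 1 0, A 1 1, B 1 0, B 1 1;
     C 0 0, C 0 1, D 0 0, D 0 1;
     C 1 0, C 1 1, D 1 0, D 1 1]

theorem blocks4_mul_aux {R : Type*} [CommRing R] (A B C D A' B' C' D' : Matrix (Fin 2) (Fin 2) R) :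
    blocks4 A B C D * blocks4 A' B' C' D' =
      blocks4 (A * A' + B * C') (A * B' + B * D') (C * A' + D * C') (C * B' + D * D') := by
  ext i j
  fin_cases i <;> fin_cases j <;>
    simp [blocks4, Matrix.mul_apply, Fin.sum_univ_succ] <;> ring

theorem blocks4_transpose_aux {R : Type*} [CommRing R] (A B C D : Matrix (Fin 2) (Fin 2) R) :
    (blocks4 A B C D)ᵀ = blocks4 Aᵀ Cᵀ Bᵀ Dᵀ := by
  ext i j
  fin_cases i <;> fin_cases j <;> simp [blocks4]

theorem J4_eq_aux (R : Type*) [CommRing R] : J4 R = blocks4 0 1 (-1) 0 := by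
  ext i j
  fin_cases i <;> fin_cases j <;> simp [blocks4, J4]

theorem blocks4_inj_aux {R : Type*} [CommRing R] {A B C D A' B' C' D' : Matrix (Fin 2) (Fin 2) R} :
    blocks4 A B C D = blocks4 A' B' C' D' ↔ A = A' ∧ B = B' ∧ C = C' ∧ D = D' := by
  constructor
  · intro h
    have k := fun i j => congrFun (congrFun h i) j
    refine ⟨?_, ?_, ?_, ?_⟩ <;> ext i j
    · have := k (Fin.castAdd 2 i) (Fin.castAdd 2 j)
      fin_cases i <;> fin_cases j <;> simpa [blocks4] using this
    · have := k (Fin.castAdd 2 i) (Fin.natAdd 2 j)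
      fin_cases i <;> fin_cases j <;> simpa [blocks4] using this
    · have := k (Fin.natAdd 2 i) (Fin.castAdd 2 j)
      fin_cases i <;> fin_cases j <;> simpa [blocks4] using this
    · have := k (Fin.natAdd 2 i) (Fin.natAdd 2 j)
      fin_cases i <;> fin_cases j <;> simpa [blocks4] using this
  · rintro ⟨rfl, rfl, rfl, rfl⟩
    rfl

theorem exists_blocks4_aux {R : Type*} [CommRing R] (g : Matrix (Fin 4) (Fin 4) R) :
    g = blocks4 !![g 0 0, g 0 1; g 1 0, g 1 1] !![g 0 2, g 0 3; g 1 2, g 1 3]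
      !![g 2 0, g 2 1; g 3 0, g 3 1] !![g 2 2, g 2 3; g 3 2, g 3 3] := by
  ext i j
  fin_cases i <;> fin_cases j <;> simp [blocks4]

theorem symp_iff_aux {R : Type*} [CommRing R] (A B C D : Matrix (Fin 2) (Fin 2) R) :
    (blocks4 A B C D)ᵀ * J4 R * blocks4 A B C D = J4 R ↔
      Aᵀ * C = Cᵀ * A ∧ Aᵀ * D - Cᵀ * B = 1 ∧ Bᵀ * D = Dᵀ * B := by
  rw [J4_eq_aux, blocks4_transpose_aux, blocks4_mul_aux, blocks4_mul_aux, blocks4_inj_aux]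
  simp only [mul_zero, mul_one, mul_neg, zero_add, add_zero, neg_mul]
  constructor
  · rintro ⟨h1, h2, h3, h4⟩
    refine ⟨?_, ?_, ?_⟩
    · rw [← sub_eq_zero, ← h1]; abel
    · rw [← h2]; abel
    · rw [← sub_eq_zero, ← h4]; abel
  · rintro ⟨h1, h2, h3⟩
    refine ⟨?_, ?_, ?_, ?_⟩
    · rw [h1]; abel
    · rw [← h2]; abel
    · have := congrArg Matrix.transpose h2
      simp only [transpose_sub, transpose_mul, transpose_transpose, transpose_one] at this
      rw [← this]; abel
    · rw [h3]; abel

theorem isUnit_det_aux (p : ℕ) [Fact p.Prime] (r : ℕ) (hr : 1 ≤ r)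
    (A B C D : Matrix (Fin 2) (Fin 2) ℤ_[p]) (h : Aᵀ * D - Cᵀ * B = 1)
    (hC : ∀ i j, (p : ℤ_[p]) ^ r ∣ C i j) : IsUnit A.det := by
  have hp : ∀ i j, (p : ℤ_[p]) ∣ C i j := fun i j => (dvd_pow_self _ (by omega)).trans (hC i j)
  choose E hE using hp
  have e : Aᵀ * D = 1 + Cᵀ * B := by rw [← h]; abel
  have d := congrArg Matrix.det e
  rw [Matrix.det_mul, Matrix.det_transpose] at d
  have : (p : ℤ_[p]) ∣ (1 + Cᵀ * B).det - 1 := by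
    simp only [Matrix.det_fin_two, Matrix.add_apply, Matrix.mul_apply, Fin.sum_univ_two,
      Matrix.transpose_apply, hE]
    simp only [Matrix.one_apply_eq, Matrix.one_apply_ne (by decide : (0 : Fin 2) ≠ 1),
      Matrix.one_apply_ne (by decide : (1 : Fin 2) ≠ 0)]
    set a := E 0 0 * B 0 0 + E 1 0 * B 1 0
    set b := E 0 0 * B 0 1 + E 1 0 * B 1 1
    set c := E 0 1 * B 0 0 + E 1 1 * B 1 0
    set d := E 0 1 * B 0 1 + E 1 1 * B 1 1
    exact ⟨a + d + p * (a * d - b * c), by simp only [a, b, c, d]; ring⟩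
  obtain ⟨y, hy⟩ := this
  have u : IsUnit (1 + Cᵀ * B).det := by
    have hn : ¬ IsUnit (1 - (1 + Cᵀ * B).det) := by
      intro hu
      have : IsUnit (p : ℤ_[p]) := by
        refine isUnit_of_dvd_unit ⟨-y, ?_⟩ hu
        linear_combination -hy
      exact PadicInt.prime_p.not_unit this
    rcases IsLocalRing.isUnit_or_isUnit_of_add_one (a := (1 + Cᵀ * B).det)
      (b := 1 - (1 + Cᵀ * B).det) (by ring) with h | h
    · exact h
    · exact absurd h hn
  rw [← d] at u
  exact isUnit_of_mul_isUnit_left u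

/-- Parahoric (Iwahori) factorization for the Siegel parabolic
(`I′_r = Q′⁻(p^rℤ_p)·Q′(ℤ_p)`, Section 2.1): a symplectic `g ∈ Sp₄(ℤ_p)` whose
lower-left `2×2` block `C` has entries in `p^r·ℤ_p` factors uniquely as
`g = (1,0;X,1)·q` with `X` symmetric with entries in `p^r·ℤ_p` and
`q = (A′,B′;0,D′)` symplectic block upper-triangular. -/
theorem stmt_11 (p : ℕ) [Fact p.Prime] (r : ℕ) (hr : 1 ≤ r)
    (g : Matrix (Fin 4) (Fin 4) ℤ_[p])
    (hg : g.transpose * J4 ℤ_[p] * g = J4 ℤ_[p])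
    (hC : ∀ i j : Fin 4, 2 ≤ (i : ℕ) → (j : ℕ) < 2 → (p : ℤ_[p]) ^ r ∣ g i j) :
    ∃! Xq : Matrix (Fin 2) (Fin 2) ℤ_[p] ×
        (Matrix (Fin 2) (Fin 2) ℤ_[p] × Matrix (Fin 2) (Fin 2) ℤ_[p] ×
          Matrix (Fin 2) (Fin 2) ℤ_[p]),
      Xq.1.transpose = Xq.1 ∧
      (∀ i j, (p : ℤ_[p]) ^ r ∣ Xq.1 i j) ∧
      (blocks4 Xq.2.1 Xq.2.2.1 0 Xq.2.2.2).transpose * J4 ℤ_[p] *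
          blocks4 Xq.2.1 Xq.2.2.1 0 Xq.2.2.2 = J4 ℤ_[p] ∧
      g = blocks4 1 0 Xq.1 1 * blocks4 Xq.2.1 Xq.2.2.1 0 Xq.2.2.2 := by
  have hg' := exists_blocks4_aux g
  have hC' : ∀ i j, (p : ℤ_[p]) ^ r ∣ !![g 2 0, g 2 1; g 3 0, g 3 1] i j := by
    intro i j
    fin_cases i <;> fin_cases j <;> exact hC _ _ (by decide) (by decide)
  generalize !![g 0 0, g 0 1; g 1 0, g 1 1] = A at *
  generalize !![g 0 2, g 0 3; g 1 2, g 1 3] = B at *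
  generalize !![g 2 0, g 2 1; g 3 0, g 3 1] = C at *
  generalize !![g 2 2, g 2 3; g 3 2, g 3 3] = D at *
  clear hC
  subst hg'
  rw [symp_iff_aux] at hg
  obtain ⟨h1, h2, h3⟩ := hg
  have hu := isUnit_det_aux p r hr A B C D h2 hC'
  have hr1 : A * A⁻¹ = 1 := Matrix.mul_nonsing_inv A hu
  have hl1 : A⁻¹ * A = 1 := Matrix.nonsing_inv_mul A hu
  have hX : (C * A⁻¹)ᵀ = C * A⁻¹ := by
    have t : (A⁻¹)ᵀ * Aᵀ = 1 := by rw [← transpose_mul, hr1, transpose_one]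
    calc (C * A⁻¹)ᵀ = (A⁻¹)ᵀ * (Cᵀ * A) * A⁻¹ := by
          rw [transpose_mul, mul_assoc, mul_assoc, hr1, mul_one]
      _ = ((A⁻¹)ᵀ * Aᵀ) * (C * A⁻¹) := by rw [← h1]; simp only [mul_assoc]
      _ = C * A⁻¹ := by rw [t, one_mul]
  have hXA : C * A⁻¹ * A = C := by rw [mul_assoc, hl1, mul_one]
  have hAX : Aᵀ * (C * A⁻¹) = Cᵀ := by
    rw [← hX, ← transpose_mul, hXA]
  refine ⟨(C * A⁻¹, A, B, D - C * A⁻¹ * B), ⟨hX, ?_, ?_, ?_⟩, ?_⟩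
  · intro i j
    simp only [Matrix.mul_apply]
    exact Finset.dvd_sum fun k _ => (hC' i k).mul_right _
  · simp only
    rw [symp_iff_aux]
    refine ⟨by simp, ?_, ?_⟩
    · rw [mul_sub, ← mul_assoc, hAX, h2]; simp
    · rw [mul_sub, transpose_sub, sub_mul, h3, transpose_mul, hX, mul_assoc Bᵀ]
  · simp only
    rw [blocks4_mul_aux, blocks4_inj_aux]
    simp [hXA]
  · rintro ⟨X, A', B', D'⟩ ⟨-, -, -, h⟩
    simp only at h
    rw [blocks4_mul_aux, blocks4_inj_aux] at h
    simp only [one_mul, zero_mul, mul_zero, add_zero] at h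
    obtain ⟨rfl, rfl, rfl, rfl⟩ := h
    have : X * A * A⁻¹ = X := by rw [mul_assoc, hr1, mul_one]
    rw [this]
    simp
end

section
/- Let p be a prime and r ≥ 1. Let g ∈ M₄(ℤ_p) satisfy ᵗg·J·g = J, and suppose the entries of g at the five positions (2,1),(3,1),(4,1),(3,2),(3,4) all lie in p^r·ℤ_p. Then there exist unique u, q ∈ M₄(ℤ_p), both satisfying ᵗu·J·u = J and ᵗq·J·q = J, with g = u·q, where: u has all diagonal entries equal to 1, its entries at the positions (2,1),(3,1),(4,1),(3,2),(3,4) lie in p^r·ℤ_p, and all its other off-diagonal entries vanish; and q vanishes at the positions (2,1),(3,1),(4,1),(3,2),(3,4). -/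
open Matrix

/-- The five sub-Klingen matrix positions `(2,1),(3,1),(4,1),(3,2),(3,4)`
(written with 0-based indices). -/
def subKlingenPos : Set (Fin 4 × Fin 4) :=
  {(1, 0), (2, 0), (3, 0), (2, 1), (2, 3)}

lemma klingen_pairing {R : Type*} [CommRing R] (g : Matrix (Fin 4) (Fin 4) R)
    (hg : g.transpose * J4 R * g = J4 R) (i j : Fin 4) :
    g 0 i * g 2 j + g 1 i * g 3 j - g 2 i * g 0 j - g 3 i * g 1 j = J4 R i j := by
  rw [← hg]
  simp [J4, Matrix.mul_apply, Fin.sum_univ_four]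
  ring

/-- The opposite unipotent element with first column `(1, x, z, y)`. -/
def klingenU {R : Type*} [CommRing R] (x y z : R) : Matrix (Fin 4) (Fin 4) R :=
  !![1, 0, 0, 0;
     x, 1, 0, 0;
     z, y, 1, -x;
     y, 0, 0, 1]

lemma klingenU_symp {R : Type*} [CommRing R] (x y z : R) :
    (klingenU x y z).transpose * J4 R * klingenU x y z = J4 R := by
  ext i j
  fin_cases i <;> fin_cases j <;>
    simp [klingenU, J4, Matrix.mul_apply, Fin.sum_univ_four]
  ring

lemma klingenU_inv {R : Type*} [CommRing R] (x y z : R) :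
    klingenU x y z * klingenU (-x) (-y) (-z) = 1 := by
  ext i j
  fin_cases i <;> fin_cases j <;>
    simp [klingenU, Matrix.mul_apply, Fin.sum_univ_four]
  ring

lemma klingenU_eq {R : Type*} [CommRing R] (u : Matrix (Fin 4) (Fin 4) R)
    (hu : u.transpose * J4 R * u = J4 R) (hd : ∀ i, u i i = 1)
    (h0 : ∀ i j : Fin 4, i ≠ j → (i, j) ∉ subKlingenPos → u i j = 0) :
    u = klingenU (u 1 0) (u 3 0) (u 2 0) := by
  have e01 := h0 0 1 (by decide) (by simp [subKlingenPos])
  have e02 := h0 0 2 (by decide) (by simp [subKlingenPos])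
  have e03 := h0 0 3 (by decide) (by simp [subKlingenPos])
  have e12 := h0 1 2 (by decide) (by simp [subKlingenPos])
  have e13 := h0 1 3 (by decide) (by simp [subKlingenPos])
  have e31 := h0 3 1 (by decide) (by simp [subKlingenPos])
  have e32 := h0 3 2 (by decide) (by simp [subKlingenPos])
  have p01 := klingen_pairing u hu 0 1
  have p03 := klingen_pairing u hu 0 3
  have d0 := hd 0
  have d1 := hd 1
  have d2 := hd 2
  have d3 := hd 3
  simp [J4, d0, d1, d3, e01, e31] at p01
  simp [J4, d0, d3, e03, e13] at p03
  have e21 : u 2 1 = u 3 0 := by linear_combination p01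
  have e23 : u 2 3 = -u 1 0 := by linear_combination p03
  ext i j
  fin_cases i <;> fin_cases j <;>
    simp [klingenU, *]

lemma klingen_unit (p : ℕ) [Fact p.Prime] (r : ℕ) (hr : 1 ≤ r)
    (g : Matrix (Fin 4) (Fin 4) ℤ_[p])
    (hg : g.transpose * J4 ℤ_[p] * g = J4 ℤ_[p])
    (hK : ∀ q ∈ subKlingenPos, (p : ℤ_[p]) ^ r ∣ g q.1 q.2) : IsUnit (g 0 0) := by
  have hp : ∀ q ∈ subKlingenPos, g q.1 q.2 ∈ IsLocalRing.maximalIdeal ℤ_[p] := by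
    intro q hq
    rw [PadicInt.maximalIdeal_eq_span_p, Ideal.mem_span_singleton]
    exact (dvd_pow_self _ (by omega)).trans (hK q hq)
  have h1 := hp (1, 0) (by simp [subKlingenPos])
  have h2 := hp (2, 0) (by simp [subKlingenPos])
  have h3 := hp (3, 0) (by simp [subKlingenPos])
  have h := klingen_pairing g hg 0 2
  simp [J4] at h
  by_contra hn
  have h0 : g 0 0 ∈ IsLocalRing.maximalIdeal ℤ_[p] := hn
  have : (1 : ℤ_[p]) ∈ IsLocalRing.maximalIdeal ℤ_[p] := by
    rw [← h]
    exact Ideal.sub_mem _ (Ideal.sub_mem _ (Ideal.add_mem _ (Ideal.mul_mem_right _ _ h0)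
      (Ideal.mul_mem_right _ _ h1)) (Ideal.mul_mem_right _ _ h2)) (Ideal.mul_mem_right _ _ h3)
  exact (Ideal.ne_top_iff_one _).1 (IsLocalRing.maximalIdeal.isMaximal _).ne_top this

/-- Parahoric factorization for the Klingen parabolic
(`I′_r = Q′⁻(p^rℤ_p)·Q′(ℤ_p)`, Section 2.1): a symplectic `g ∈ Sp₄(ℤ_p)` whose
entries at the five sub-Klingen positions lie in `p^r·ℤ_p` factors uniquely as
`g = u·q` with `u` in the opposite unipotent radical (diagonal `1`, supported
off-diagonally only at the five positions, with those entries in `p^r·ℤ_p`)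
and `q` symplectic in the standard Klingen parabolic. -/
theorem stmt_13 (p : ℕ) [Fact p.Prime] (r : ℕ) (hr : 1 ≤ r)
    (g : Matrix (Fin 4) (Fin 4) ℤ_[p])
    (hg : g.transpose * J4 ℤ_[p] * g = J4 ℤ_[p])
    (hK : ∀ q ∈ subKlingenPos, (p : ℤ_[p]) ^ r ∣ g q.1 q.2) :
    ∃! uq : Matrix (Fin 4) (Fin 4) ℤ_[p] × Matrix (Fin 4) (Fin 4) ℤ_[p],
      uq.1.transpose * J4 ℤ_[p] * uq.1 = J4 ℤ_[p] ∧
      uq.2.transpose * J4 ℤ_[p] * uq.2 = J4 ℤ_[p] ∧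
      g = uq.1 * uq.2 ∧
      (∀ i : Fin 4, uq.1 i i = 1) ∧
      (∀ q ∈ subKlingenPos, (p : ℤ_[p]) ^ r ∣ uq.1 q.1 q.2) ∧
      (∀ i j : Fin 4, i ≠ j → (i, j) ∉ subKlingenPos → uq.1 i j = 0) ∧
      ∀ q ∈ subKlingenPos, uq.2 q.1 q.2 = 0 := by
  obtain ⟨b, hb⟩ := (klingen_unit p r hr g hg hK).exists_right_inv
  have k1 := hK (1, 0) (by simp [subKlingenPos])
  have k2 := hK (2, 0) (by simp [subKlingenPos])
  have k3 := hK (3, 0) (by simp [subKlingenPos])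
  dsimp only at k1 k2 k3
  set x := g 1 0 * b with hx
  set y := g 3 0 * b with hy
  set z := g 2 0 * b with hz
  have hxd : (p : ℤ_[p]) ^ r ∣ x := k1.mul_right b
  have hyd : (p : ℤ_[p]) ^ r ∣ y := k3.mul_right b
  have hzd : (p : ℤ_[p]) ^ r ∣ z := k2.mul_right b
  refine ⟨(klingenU x y z, klingenU (-x) (-y) (-z) * g), ?_, ?_⟩
  · have hq : (klingenU (-x) (-y) (-z) * g).transpose * J4 ℤ_[p] *
        (klingenU (-x) (-y) (-z) * g) = J4 ℤ_[p] := by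
      have : (klingenU (-x) (-y) (-z) * g).transpose * J4 ℤ_[p] *
        (klingenU (-x) (-y) (-z) * g) = g.transpose * ((klingenU (-x) (-y) (-z)).transpose *
          J4 ℤ_[p] * klingenU (-x) (-y) (-z)) * g := by
        simp only [Matrix.transpose_mul, Matrix.mul_assoc]
      rw [this, klingenU_symp, hg]
    refine ⟨klingenU_symp x y z, hq, ?_, ?_, ?_, ?_, ?_⟩
    · dsimp only
      rw [← Matrix.mul_assoc, klingenU_inv, Matrix.one_mul]
    · intro i
      fin_cases i <;> simp [klingenU]
    · intro q hq
      simp only [subKlingenPos, Set.mem_insert_iff, Set.mem_singleton_iff] at hq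
      rcases hq with rfl | rfl | rfl | rfl | rfl <;> simpa [klingenU]
    · intro i j hij hn
      fin_cases i <;> fin_cases j <;> simp [klingenU, subKlingenPos] at hij hn ⊢
    · dsimp only
      have q0 : (klingenU (-x) (-y) (-z) * g) 0 0 = g 0 0 := by
        simp [klingenU, Matrix.mul_apply, Fin.sum_univ_four]
      have q1 : (klingenU (-x) (-y) (-z) * g) 1 0 = 0 := by
        simp [klingenU, Matrix.mul_apply, Fin.sum_univ_four]
        linear_combination -(g 1 0) * hb - g 0 0 * hx
      have q3 : (klingenU (-x) (-y) (-z) * g) 3 0 = 0 := by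
        simp [klingenU, Matrix.mul_apply, Fin.sum_univ_four]
        linear_combination -(g 3 0) * hb - g 0 0 * hy
      have q2 : (klingenU (-x) (-y) (-z) * g) 2 0 = 0 := by
        simp [klingenU, Matrix.mul_apply, Fin.sum_univ_four]
        linear_combination -(g 2 0) * hb - g 0 0 * hz - g 1 0 * hy + g 3 0 * hx
      have p1 := klingen_pairing _ hq 0 1
      have p3 := klingen_pairing _ hq 0 3
      rw [q0, q1, q2, q3] at p1 p3
      generalize klingenU (-x) (-y) (-z) * g = q at *
      simp [J4] at p1 p3
      have hne : g 0 0 ≠ 0 := by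
        intro h
        simp [h] at hb
      intro s hs
      simp only [subKlingenPos, Set.mem_insert_iff, Set.mem_singleton_iff] at hs
      rcases hs with rfl | rfl | rfl | rfl | rfl
      · exact q1
      · exact q2
      · exact q3
      · exact p1.resolve_left hne
      · exact p3.resolve_left hne
  · rintro ⟨u, q⟩ ⟨hu, -, hgu, hd, -, h0, hq0⟩
    dsimp only at hu hgu hd h0 hq0
    have q1 := hq0 (1, 0) (by simp [subKlingenPos])
    have q2 := hq0 (2, 0) (by simp [subKlingenPos])
    have q3 := hq0 (3, 0) (by simp [subKlingenPos])
    dsimp only at q1 q2 q3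
    have hcol : ∀ i, g i 0 = u i 0 * q 0 0 := by
      intro i
      rw [hgu]
      simp [Matrix.mul_apply, Fin.sum_univ_four, q1, q2, q3]
    have ha : g 0 0 = q 0 0 := by rw [hcol 0, hd 0, one_mul]
    have hc : ∀ i, g i 0 * b = u i 0 := by
      intro i
      rw [hcol i, ← ha, mul_assoc, hb, mul_one]
    have hueq : u = klingenU x y z := by
      rw [hx, hy, hz, hc 1, hc 2, hc 3]
      exact klingenU_eq u hu hd h0
    have hinv : klingenU (-x) (-y) (-z) * klingenU x y z = 1 := by
      simpa using klingenU_inv (-x) (-y) (-z)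
    rw [Prod.mk.injEq]
    refine ⟨hueq, ?_⟩
    rw [hgu, hueq, ← Matrix.mul_assoc, hinv, Matrix.one_mul]
end

section
/- Let p be a prime. Every g ∈ M₄(ℚ_p) with ᵗg·J·g = J factors as g = k·b, where k ∈ M₄(ℤ_p) with ᵗk·J·k = J, and b ∈ M₄(ℚ_p) with ᵗb·J·b = J and b vanishing at the six sub-Borel positions. That is, Sp₄(ℚ_p) = Sp₄(ℤ_p)·B(ℚ_p), where B is the standard Borel subgroup. -/
open Matrix

/-- The six sub-Borel matrix positions `(2,1),(3,1),(3,2),(3,4),(4,1),(4,2)`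
(written with 0-based indices). -/
def subBorelPos : Set (Fin 4 × Fin 4) :=
  {(1, 0), (2, 0), (2, 1), (2, 3), (3, 0), (3, 1)}

/-- `k` is symplectic with integral entries. -/
def IwInt (p : ℕ) [Fact p.Prime] (k : Matrix (Fin 4) (Fin 4) ℚ_[p]) : Prop :=
  (∀ i j, ‖k i j‖ ≤ 1) ∧ k.transpose * J4 ℚ_[p] * k = J4 ℚ_[p]

/-- Existence of the decomposition, with integrality phrased by norms. -/
def IwQ (p : ℕ) [Fact p.Prime] (g : Matrix (Fin 4) (Fin 4) ℚ_[p]) : Prop :=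
  ∃ k b : Matrix (Fin 4) (Fin 4) ℚ_[p], IwInt p k ∧
      b.transpose * J4 ℚ_[p] * b = J4 ℚ_[p] ∧
      (∀ q ∈ subBorelPos, b q.1 q.2 = 0) ∧ g = k * b

theorem iw_sp_mul {R : Type*} [CommRing R] {k l : Matrix (Fin 4) (Fin 4) R}
    (hk : k.transpose * J4 R * k = J4 R) (hl : l.transpose * J4 R * l = J4 R) :
    (k * l).transpose * J4 R * (k * l) = J4 R := by
  calc (k * l).transpose * J4 R * (k * l)
      = l.transpose * (k.transpose * J4 R * k) * l := by
        rw [transpose_mul]; simp only [Matrix.mul_assoc]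
    _ = _ := by rw [hk, hl]

theorem iw_int_mul (p : ℕ) [Fact p.Prime] {k l : Matrix (Fin 4) (Fin 4) ℚ_[p]}
    (hk : IwInt p k) (hl : IwInt p l) : IwInt p (k * l) := by
  refine ⟨fun i j => ?_, iw_sp_mul hk.2 hl.2⟩
  rw [Matrix.mul_apply]
  have : (∑ x, k i x * l x j) ∈ PadicInt.subring p := by
    refine sum_mem fun x _ => mul_mem ?_ ?_
    · exact hk.1 i x
    · exact hl.1 x j
  exact this

theorem iw_red (p : ℕ) [Fact p.Prime] {g u v : Matrix (Fin 4) (Fin 4) ℚ_[p]}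
    (hv : IwInt p v) (hvu : v * u = 1) (h : IwQ p (u * g)) : IwQ p g := by
  obtain ⟨k, b, hk, hb, hz, he⟩ := h
  refine ⟨v * k, b, iw_int_mul p hv hk, hb, hz, ?_⟩
  rw [Matrix.mul_assoc, ← he, ← Matrix.mul_assoc, hvu, Matrix.one_mul]

theorem iw_sl2 (p : ℕ) [Fact p.Prime] (x z : ℚ_[p]) :
    ∃ a b c d : ℚ_[p], ‖a‖ ≤ 1 ∧ ‖b‖ ≤ 1 ∧ ‖c‖ ≤ 1 ∧ ‖d‖ ≤ 1 ∧
      a * d - b * c = 1 ∧ c * x + d * z = 0 := by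
  rcases le_or_gt ‖z‖ ‖x‖ with h | h
  · by_cases hx : x = 0
    · have hz : z = 0 := by simpa [hx] using h
      exact ⟨1, 0, 0, 1, by simp, by simp, by simp, by simp, by simp, by simp [hz]⟩
    · refine ⟨1, 0, -(z / x), 1, by simp, by simp, ?_, by simp, by simp, by field_simp; ring⟩
      rw [norm_neg, norm_div]
      exact div_le_one_of_le₀ h (norm_nonneg _)
  · have hz : z ≠ 0 := by
      rintro rfl
      simp at h
      exact absurd h (not_lt.mpr (norm_nonneg x))
    refine ⟨0, 1, -1, x / z, by simp, by simp, by simp, ?_, by simp, by field_simp; ring⟩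
    rw [norm_div]
    exact div_le_one_of_le₀ h.le (norm_nonneg _)

/-- `SL₂` in coordinates 1, 3. -/
def iwE {R : Type*} [CommRing R] (a b c d : R) : Matrix (Fin 4) (Fin 4) R :=
  !![a, 0, b, 0; 0, 1, 0, 0; c, 0, d, 0; 0, 0, 0, 1]

/-- `SL₂` in coordinates 2, 4. -/
def iwF {R : Type*} [CommRing R] (a b c d : R) : Matrix (Fin 4) (Fin 4) R :=
  !![1, 0, 0, 0; 0, a, 0, b; 0, 0, 1, 0; 0, c, 0, d]

/-- `SL₂` in the Siegel Levi. -/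
def iwL {R : Type*} [CommRing R] (a b c d : R) : Matrix (Fin 4) (Fin 4) R :=
  !![a, b, 0, 0; c, d, 0, 0; 0, 0, d, -c; 0, 0, -b, a]

theorem iwE_sp {R : Type*} [CommRing R] {a b c d : R} (h : a * d - b * c = 1) :
    (iwE a b c d).transpose * J4 R * iwE a b c d = J4 R := by
  ext i j
  fin_cases i <;> fin_cases j <;>
    simp [iwE, J4, Matrix.mul_apply, Fin.sum_univ_four] <;>
    first | ring1 | linear_combination h | linear_combination -h

theorem iwE_inv {R : Type*} [CommRing R] {a b c d : R} (h : a * d - b * c = 1) :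
    iwE d (-b) (-c) a * iwE a b c d = 1 := by
  ext i j
  fin_cases i <;> fin_cases j <;>
    simp [iwE, Matrix.mul_apply, Fin.sum_univ_four] <;>
    first | ring1 | linear_combination h | linear_combination -h

theorem iwE_move (p : ℕ) [Fact p.Prime] {a b c d : ℚ_[p]} (ha : ‖a‖ ≤ 1) (hb : ‖b‖ ≤ 1)
    (hc : ‖c‖ ≤ 1) (hd : ‖d‖ ≤ 1) (h : a * d - b * c = 1) {g : Matrix (Fin 4) (Fin 4) ℚ_[p]}
    (hQ : IwQ p (iwE a b c d * g)) : IwQ p g := by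
  refine iw_red p ⟨?_, iwE_sp ?_⟩ (iwE_inv h) hQ
  · intro i j
    fin_cases i <;> fin_cases j <;> simp [iwE, ha, hb, hc, hd]
  · linear_combination h

theorem iwF_sp {R : Type*} [CommRing R] {a b c d : R} (h : a * d - b * c = 1) :
    (iwF a b c d).transpose * J4 R * iwF a b c d = J4 R := by
  ext i j
  fin_cases i <;> fin_cases j <;>
    simp [iwF, J4, Matrix.mul_apply, Fin.sum_univ_four] <;>
    first | ring1 | linear_combination h | linear_combination -h

theorem iwF_inv {R : Type*} [CommRing R] {a b c d : R} (h : a * d - b * c = 1) :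
    iwF d (-b) (-c) a * iwF a b c d = 1 := by
  ext i j
  fin_cases i <;> fin_cases j <;>
    simp [iwF, Matrix.mul_apply, Fin.sum_univ_four] <;>
    first | ring1 | linear_combination h | linear_combination -h

theorem iwF_move (p : ℕ) [Fact p.Prime] {a b c d : ℚ_[p]} (ha : ‖a‖ ≤ 1) (hb : ‖b‖ ≤ 1)
    (hc : ‖c‖ ≤ 1) (hd : ‖d‖ ≤ 1) (h : a * d - b * c = 1) {g : Matrix (Fin 4) (Fin 4) ℚ_[p]}
    (hQ : IwQ p (iwF a b c d * g)) : IwQ p g := by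
  refine iw_red p ⟨?_, iwF_sp ?_⟩ (iwF_inv h) hQ
  · intro i j
    fin_cases i <;> fin_cases j <;> simp [iwF, ha, hb, hc, hd]
  · linear_combination h

theorem iwL_sp {R : Type*} [CommRing R] {a b c d : R} (h : a * d - b * c = 1) :
    (iwL a b c d).transpose * J4 R * iwL a b c d = J4 R := by
  ext i j
  fin_cases i <;> fin_cases j <;>
    simp [iwL, J4, Matrix.mul_apply, Fin.sum_univ_four] <;>
    first | ring1 | linear_combination h | linear_combination -h

theorem iwL_inv {R : Type*} [CommRing R] {a b c d : R} (h : a * d - b * c = 1) :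
    iwL d (-b) (-c) a * iwL a b c d = 1 := by
  ext i j
  fin_cases i <;> fin_cases j <;>
    simp [iwL, Matrix.mul_apply, Fin.sum_univ_four] <;>
    first | ring1 | linear_combination h | linear_combination -h

theorem iwL_move (p : ℕ) [Fact p.Prime] {a b c d : ℚ_[p]} (ha : ‖a‖ ≤ 1) (hb : ‖b‖ ≤ 1)
    (hc : ‖c‖ ≤ 1) (hd : ‖d‖ ≤ 1) (h : a * d - b * c = 1) {g : Matrix (Fin 4) (Fin 4) ℚ_[p]}
    (hQ : IwQ p (iwL a b c d * g)) : IwQ p g := by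
  refine iw_red p ⟨?_, iwL_sp ?_⟩ (iwL_inv h) hQ
  · intro i j
    fin_cases i <;> fin_cases j <;> simp [iwL, ha, hb, hc, hd]
  · linear_combination h

/-- Last step: the first column is already reduced. -/
theorem iw_step4 (p : ℕ) [Fact p.Prime] (g : Matrix (Fin 4) (Fin 4) ℚ_[p])
    (hg : g.transpose * J4 ℚ_[p] * g = J4 ℚ_[p])
    (h1 : g 1 0 = 0) (h2 : g 2 0 = 0) (h3 : g 3 0 = 0) : IwQ p g := by
  have e1 := congrFun (congrFun hg 0) 1
  have e2 := congrFun (congrFun hg 0) 2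
  have e3 := congrFun (congrFun hg 0) 3
  simp [J4, Matrix.mul_apply, Fin.sum_univ_four, h1, h2, h3] at e1 e2 e3
  have h0 : g 0 0 ≠ 0 := by
    intro h0
    simp [h0] at e2
  have h21 : g 2 1 = 0 := by simpa [h0] using e1
  have h23 : g 2 3 = 0 := by simpa [h0] using e3
  obtain ⟨a, b, c, d, ha, hb, hc, hd, hdet, hz⟩ := iw_sl2 p (g 1 1) (g 3 1)
  refine iwF_move p ha hb hc hd hdet ⟨1, iwF a b c d * g, ⟨?_, by simp⟩,
    iw_sp_mul (iwF_sp hdet) hg, ?_, by simp⟩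
  · intro i j
    rw [Matrix.one_apply]
    split_ifs <;> simp
  · intro q hq
    simp only [subBorelPos, Set.mem_insert_iff, Set.mem_singleton_iff] at hq
    rcases hq with rfl | rfl | rfl | rfl | rfl | rfl <;>
      simp [iwF, Matrix.mul_apply, Fin.sum_univ_four, h1, h2, h3, h21, h23, hz]

theorem iw_step3 (p : ℕ) [Fact p.Prime] (g : Matrix (Fin 4) (Fin 4) ℚ_[p])
    (hg : g.transpose * J4 ℚ_[p] * g = J4 ℚ_[p])
    (h2 : g 2 0 = 0) (h3 : g 3 0 = 0) : IwQ p g := by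
  obtain ⟨a, b, c, d, ha, hb, hc, hd, hdet, hz⟩ := iw_sl2 p (g 0 0) (g 1 0)
  refine iwL_move p ha hb hc hd hdet (iw_step4 p _ (iw_sp_mul (iwL_sp hdet) hg) ?_ ?_ ?_) <;>
    simp [iwL, Matrix.mul_apply, Fin.sum_univ_four, h2, h3, hz]

theorem iw_step2 (p : ℕ) [Fact p.Prime] (g : Matrix (Fin 4) (Fin 4) ℚ_[p])
    (hg : g.transpose * J4 ℚ_[p] * g = J4 ℚ_[p])
    (h2 : g 2 0 = 0) : IwQ p g := by
  obtain ⟨a, b, c, d, ha, hb, hc, hd, hdet, hz⟩ := iw_sl2 p (g 1 0) (g 3 0)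
  refine iwF_move p ha hb hc hd hdet (iw_step3 p _ (iw_sp_mul (iwF_sp hdet) hg) ?_ ?_) <;>
    simp [iwF, Matrix.mul_apply, Fin.sum_univ_four, h2, hz]

theorem iw_step1 (p : ℕ) [Fact p.Prime] (g : Matrix (Fin 4) (Fin 4) ℚ_[p])
    (hg : g.transpose * J4 ℚ_[p] * g = J4 ℚ_[p]) : IwQ p g := by
  obtain ⟨a, b, c, d, ha, hb, hc, hd, hdet, hz⟩ := iw_sl2 p (g 0 0) (g 2 0)
  refine iwE_move p ha hb hc hd hdet (iw_step2 p _ (iw_sp_mul (iwE_sp hdet) hg) ?_)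
  simp [iwE, Matrix.mul_apply, Fin.sum_univ_four, hz]

/-- Iwasawa decomposition `Sp₄(ℚ_p) = Sp₄(ℤ_p)·B(ℚ_p)` (Section 4.2): every
symplectic `g` over `ℚ_p` factors as `g = k·b` with `k` symplectic having
`ℤ_p`-entries and `b` symplectic vanishing at the six sub-Borel positions. -/
theorem stmt_14 (p : ℕ) [Fact p.Prime] (g : Matrix (Fin 4) (Fin 4) ℚ_[p])
    (hg : g.transpose * J4 ℚ_[p] * g = J4 ℚ_[p]) :
    ∃ k b : Matrix (Fin 4) (Fin 4) ℚ_[p],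
      (∀ i j, ∃ c : ℤ_[p], (c : ℚ_[p]) = k i j) ∧
      k.transpose * J4 ℚ_[p] * k = J4 ℚ_[p] ∧
      b.transpose * J4 ℚ_[p] * b = J4 ℚ_[p] ∧
      (∀ q ∈ subBorelPos, b q.1 q.2 = 0) ∧
      g = k * b := by
  obtain ⟨k, b, hk, hb, hz, he⟩ := iw_step1 p g hg
  exact ⟨k, b, fun i j => ⟨⟨k i j, hk.1 i j⟩, rfl⟩, hk.2, hb, hz, he⟩
end
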